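/- Let p ∈ ℂ with 0 < |p| < 1, let Λ ∈ ℂ∖{0} with Λ ∉ p^{2ℤ}, and let x ∈ ℂ∖{0} with x ∉ p^{4ℤ}. Then, with θ taken at base p⁴, the following identity holds: 1 = [ θ(p³Λ^{−1};p⁴)θ(p^{−3}Λ;p⁴)/(2 θ(p^{−4}Λ;p⁴)θ(p^{−6}Λ;p⁴)) + θ(pΛ^{−1};p⁴)θ(p^{−1}Λ;p⁴)/(2 θ(p^{−2}Λ;p⁴)θ(p^{−4}Λ;p⁴)) ] · θ(p^{−1}x;p⁴)θ(p^{−3}x;p⁴)/(θ(x;p⁴)θ(x^{−1};p⁴)) + [ θ(−p³Λ^{−1};p⁴)θ(−p^{−3}Λ;p⁴)/(2 θ(p^{−4}Λ;p⁴)θ(p^{−6}Λ;p⁴)) + θ(−pΛ^{−1};p⁴)θ(−p^{−1}Λ;p⁴)/(2 θ(p^{−2}Λ;p⁴)θ(p^{−4}Λ;p⁴)) ] · θ(−p^{−1}x;p⁴)θ(−p^{−3}x;p⁴)/(θ(x;p⁴)θ(x^{−1};p⁴)). (This is the identity, with q = p⁴ and λ₁ = Λ, expressing that the residues of the elliptic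 function m_{2,1} of the 4₁ knot monodromy sum to zero.) -/

import Mathlib

/-!
In terms of `T = θ₃` at the nome `q = p ^ 4`, splitting the double series of a product of two theta
functions by the parity of the sum of the indices gives
* `θ(u) θ(u⁻¹) = T(q) T(u²) - u T(1) T(q u²)`,
* `θ(p⁻¹ y) θ(p⁻³ y) = T(p²) (T(y²) - p y T(q y²))`.

The first with `u = ±p⁻¹ Λ, ±p⁻³ Λ` and the second with `y = p⁻¹ Λ` show that neither bracket
depends on `Λ`: they are equal to `(T(q) ± p⁻¹ T(1)) / (2 T(p²))`. The second formula with `y = ±x`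
then turns the numerator of the right-hand side into the first formula with `u = x`. The zeros of
the theta functions are read off the Jacobi triple product, obtained as the limit of its finite
version.
-/

/-- The Jacobi theta function `θ(u;Q) = Σ_{k∈ℤ} (−1)^k Q^{k(k+1)/2} u^k`. -/
noncomputable def jtheta (u Q : ℂ) : ℂ :=
  ∑' k : ℤ, (-1 : ℂ) ^ k * Q ^ (k * (k + 1) / 2) * u ^ k

open Filter Finset Topology

/-- The `k`-th term of `nomeTheta`. -/
noncomputable def nomeThetaTerm (q z : ℂ) (k : ℤ) : ℂ := q ^ (k ^ 2) * z ^ k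

/-- The theta function `θ₃` in the nome `q` and the multiplicative variable `z = exp (2πiu)`;
every value of `jtheta` is one of its values by `jtheta_sq`. -/
noncomputable def nomeTheta (q z : ℂ) : ℂ := ∑' k : ℤ, nomeThetaTerm q z k

/-- The infinite `q`-Pochhammer symbol `(Q ^ (n + 1); Q)_∞`, with base `Q`. The integer index lets
finite products be written as quotients of tails; for `n < 0` it is `0`, having `1 - Q ^ 0` as a
factor. -/
noncomputable def qPochhammerTail (Q : ℂ) (n : ℤ) : ℂ :=
  ∏' i : ℕ, (1 - Q ^ (n + 1 + i))

lemma norm_sq_lt_one {q : ℂ} (hq : ‖q‖ < 1) : ‖q ^ 2‖ < 1 := by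
  simpa using pow_lt_one₀ (norm_nonneg q) hq two_ne_zero

section NomeTheta

variable {q z w : ℂ}

lemma nomeTheta_inv (q z : ℂ) : nomeTheta q z⁻¹ = nomeTheta q z := by
  rw [nomeTheta, nomeTheta, ← (Equiv.neg ℤ).tsum_eq]
  exact tsum_congr fun k ↦ by simp [nomeThetaTerm]

lemma nomeThetaTerm_add_one (hq : q ≠ 0) (hz : z ≠ 0) (k : ℤ) :
    nomeThetaTerm q z (k + 1) = q * z * (q ^ 2) ^ k * nomeThetaTerm q z k := by
  have hexp : (k + 1) ^ 2 = 2 * k + k ^ 2 + 1 := by ring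
  rw [nomeThetaTerm, nomeThetaTerm, hexp, zpow_add_one₀ hz, zpow_add_one₀ hq, zpow_add₀ hq,
    zpow_mul, zpow_ofNat]
  ring

lemma mul_nomeTheta_sq_mul (hq : q ≠ 0) (hz : z ≠ 0) :
    q * z * nomeTheta q (q ^ 2 * z) = nomeTheta q z := by
  rw [nomeTheta, nomeTheta, ← tsum_mul_left,
    ← (Equiv.addRight (1 : ℤ)).tsum_eq (nomeThetaTerm q z)]
  refine tsum_congr fun k ↦ ?_
  rw [Equiv.coe_addRight, nomeThetaTerm_add_one hq hz, nomeThetaTerm, nomeThetaTerm, mul_zpow]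
  ring

lemma summable_nomeThetaTerm (hq0 : q ≠ 0) (hq1 : ‖q‖ < 1) (hz : z ≠ 0) :
    Summable (nomeThetaTerm q z) := by
  have him : 0 < (Complex.log q / (Real.pi * Complex.I)).im := by
    have : (Complex.log q / (Real.pi * Complex.I)).im = -Real.log ‖q‖ / Real.pi := by
      rw [← div_div, Complex.div_I]
      simp [neg_div, Complex.log_re]
    rw [this]
    exact div_pos (neg_pos.mpr (Real.log_neg (norm_pos_iff.mpr hq0) hq1)) Real.pi_pos
  refine ((summable_jacobiTheta₂_term_iff (Complex.log z / (2 * (Real.pi * Complex.I))) _).mpr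
    him).congr fun k ↦ ?_
  rw [jacobiTheta₂_term, nomeThetaTerm, Complex.exp_add]
  conv_rhs => rw [← Complex.exp_log hq0, ← Complex.exp_log hz, ← Complex.exp_int_mul,
    ← Complex.exp_int_mul, mul_comm]
  congr 2 <;> push_cast <;> field_simp

/-- Splits the pairs of integers `(k, l)` by the parity of `k + l`: they are `(a + b, a - b)` when
it is even and `(a + b + 1, a - b)` when it is odd. -/
def intPairParityEquiv : (ℤ × ℤ) ⊕ (ℤ × ℤ) ≃ ℤ × ℤ where
  toFun := Sum.elim (fun m ↦ (m.1 + m.2, m.1 - m.2)) (fun m ↦ (m.1 + m.2 + 1, m.1 - m.2))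
  invFun k :=
    if Even (k.1 + k.2) then .inl ((k.1 + k.2) / 2, (k.1 - k.2) / 2)
    else .inr ((k.1 + k.2) / 2, (k.1 - k.2) / 2)
  left_inv := by
    rintro (⟨a, b⟩ | ⟨a, b⟩)
    · have heven : Even (a + b + (a - b)) := by grind
      exact (if_pos heven).trans (congrArg Sum.inl (Prod.ext (by grind) (by grind)))
    · have hodd : ¬Even (a + b + 1 + (a - b)) := by grind
      exact (if_neg hodd).trans (congrArg Sum.inr (Prod.ext (by grind) (by grind)))
  right_inv := by
    rintro ⟨k, l⟩
    simp only [Int.even_iff]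
    split_ifs <;> simp only [Sum.elim_inl, Sum.elim_inr, Prod.mk.injEq] <;> omega

lemma hasSum_nomeTheta_mul_nomeTheta (hq0 : q ≠ 0) (hq1 : ‖q‖ < 1) (hz : z ≠ 0) (hw : w ≠ 0) :
    HasSum (fun k : ℤ × ℤ ↦ nomeThetaTerm q z k.1 * nomeThetaTerm q w k.2)
      (nomeTheta q z * nomeTheta q w) := by
  have hsz := summable_nomeThetaTerm hq0 hq1 hz
  have hsw := summable_nomeThetaTerm hq0 hq1 hw
  have := summable_mul_of_summable_norm hsz.norm hsw.norm
  exact hsz.hasSum.mul hsw.hasSum this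

lemma nomeThetaTerm_add_mul_nomeThetaTerm_sub (hq : q ≠ 0) (hz : z ≠ 0) (hw : w ≠ 0) (a b : ℤ) :
    nomeThetaTerm q z (a + b) * nomeThetaTerm q w (a - b) =
      nomeThetaTerm (q ^ 2) (z * w) a * nomeThetaTerm (q ^ 2) (z / w) b := by
  have hexp : q ^ ((a + b) ^ 2) * q ^ ((a - b) ^ 2) = (q ^ 2) ^ (a ^ 2) * (q ^ 2) ^ (b ^ 2) := by
    rw [← zpow_ofNat q 2, ← zpow_mul, ← zpow_mul, ← zpow_add₀ hq, ← zpow_add₀ hq]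
    congr 1
    ring
  simp only [nomeThetaTerm]
  rw [zpow_add₀ hz, zpow_sub₀ hw, mul_zpow, div_zpow]
  linear_combination z ^ a * z ^ b * (w ^ a / w ^ b) * hexp

lemma nomeThetaTerm_add_add_one_mul_nomeThetaTerm_sub (hq : q ≠ 0) (hz : z ≠ 0) (hw : w ≠ 0)
    (a b : ℤ) :
    nomeThetaTerm q z (a + b + 1) * nomeThetaTerm q w (a - b) =
      q * z * (nomeThetaTerm (q ^ 2) (q ^ 2 * (z * w)) a *
        nomeThetaTerm (q ^ 2) (q ^ 2 * (z / w)) b) := by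
  have hexp : q ^ ((a + b + 1) ^ 2) = q * (q ^ 2) ^ a * (q ^ 2) ^ b * q ^ ((a + b) ^ 2) := by
    simp only [← zpow_ofNat q 2, ← zpow_mul]
    rw [← zpow_one_add₀ hq, ← zpow_add₀ hq, ← zpow_add₀ hq]
    congr 1
    ring
  have heven := nomeThetaTerm_add_mul_nomeThetaTerm_sub hq hz hw a b
  simp only [nomeThetaTerm] at heven ⊢
  rw [hexp, zpow_add_one₀ hz, mul_zpow (q ^ 2), mul_zpow (q ^ 2)]
  linear_combination q * (q ^ 2) ^ a * (q ^ 2) ^ b * z * heven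

lemma nomeTheta_mul_nomeTheta (hq0 : q ≠ 0) (hq1 : ‖q‖ < 1) (hz : z ≠ 0) (hw : w ≠ 0) :
    nomeTheta q z * nomeTheta q w =
      nomeTheta (q ^ 2) (z * w) * nomeTheta (q ^ 2) (z / w) +
        q * z * (nomeTheta (q ^ 2) (q ^ 2 * (z * w)) * nomeTheta (q ^ 2) (q ^ 2 * (z / w))) := by
  have hQ0 : q ^ 2 ≠ 0 := pow_ne_zero 2 hq0
  have hQ1 : ‖q ^ 2‖ < 1 := norm_sq_lt_one hq1
  have hzw : z * w ≠ 0 := mul_ne_zero hz hw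
  have hz_w : z / w ≠ 0 := div_ne_zero hz hw
  have heven := hasSum_nomeTheta_mul_nomeTheta hQ0 hQ1 hzw hz_w
  have hodd := (hasSum_nomeTheta_mul_nomeTheta hQ0 hQ1 (mul_ne_zero hQ0 hzw)
    (mul_ne_zero hQ0 hz_w)).mul_left (q * z)
  simp only [← nomeThetaTerm_add_mul_nomeThetaTerm_sub hq0 hz hw] at heven
  simp only [← nomeThetaTerm_add_add_one_mul_nomeThetaTerm_sub hq0 hz hw] at hodd
  have hprod := intPairParityEquiv.hasSum_iff.mpr (hasSum_nomeTheta_mul_nomeTheta hq0 hq1 hz hw)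
  exact hprod.unique (.sum heven hodd)

end NomeTheta

section QPochhammerTail

variable {Q : ℂ}

lemma summable_norm_zpow_add_natCast (hQ0 : Q ≠ 0) (hQ1 : ‖Q‖ < 1) (n : ℤ) :
    Summable fun i : ℕ ↦ ‖-Q ^ (n + i)‖ := by
  simpa [zpow_add₀ hQ0] using
    (summable_geometric_of_lt_one (norm_nonneg Q) hQ1).mul_left ‖Q ^ n‖

lemma qPochhammerTail_sub_one (hQ0 : Q ≠ 0) (hQ1 : ‖Q‖ < 1) (n : ℤ) :
    qPochhammerTail Q (n - 1) = (1 - Q ^ n) * qPochhammerTail Q n := by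
  have hmul : Multipliable fun i : ℕ ↦ 1 - Q ^ (n + 1 + i) := by
    simpa only [sub_eq_add_neg] using
      multipliable_one_add_of_summable (summable_norm_zpow_add_natCast hQ0 hQ1 (n + 1))
  have hshift (i : ℕ) : n + ((i + 1 : ℕ) : ℤ) = n + 1 + i := by
    push_cast
    ring
  rw [qPochhammerTail, sub_add_cancel, tprod_eq_zero_mul' (by simpa only [hshift] using hmul)]
  simp only [hshift, Nat.cast_zero, add_zero, qPochhammerTail]

lemma qPochhammerTail_of_neg {n : ℤ} (hn : n < 0) : qPochhammerTail Q n = 0 := by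
  refine tprod_of_exists_eq_zero ⟨(-(n + 1)).toNat, ?_⟩
  have hexp : n + 1 + ((-(n + 1)).toNat : ℤ) = 0 := by omega
  rw [hexp, zpow_zero, sub_self]

lemma qPochhammerTail_natCast_ne_zero (hQ0 : Q ≠ 0) (hQ1 : ‖Q‖ < 1) (n : ℕ) :
    qPochhammerTail Q n ≠ 0 := by
  refine tprod_one_add_ne_zero_of_summable (f := fun i : ℕ ↦ -Q ^ ((n : ℤ) + 1 + i))
    (fun i h ↦ ?_) (summable_norm_zpow_add_natCast hQ0 hQ1 (n + 1))
  have hpow : Q ^ (n + 1 + i) = 1 := by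
    rw [← sub_eq_add_neg, sub_eq_zero] at h
    exact_mod_cast h.symm
  have hnorm : ‖Q‖ ^ (n + 1 + i) < 1 := pow_lt_one₀ (norm_nonneg Q) hQ1 (by omega)
  simp [← norm_pow, hpow] at hnorm

lemma tendsto_qPochhammerTail (hQ1 : ‖Q‖ < 1) :
    Tendsto (qPochhammerTail Q) atTop (𝓝 1) := by
  rw [← Nat.map_cast_int_atTop, tendsto_map'_iff]
  have hlim (i : ℕ) : Tendsto (fun n : ℕ ↦ -Q ^ ((n : ℤ) + 1 + i)) atTop (𝓝 0) := by
    have hpow := (tendsto_pow_atTop_nhds_zero_of_norm_lt_one hQ1).comp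
      (tendsto_add_atTop_nat (1 + i))
    rw [← neg_zero]
    refine hpow.neg.congr fun n ↦ ?_
    rw [Function.comp_apply, ← zpow_natCast]
    push_cast
    rw [add_assoc]
  have hbound : ∀ᶠ n : ℕ in atTop, ∀ i : ℕ, ‖-Q ^ ((n : ℤ) + 1 + i)‖ ≤ ‖Q‖ ^ i := by
    refine .of_forall fun n i ↦ ?_
    rw [norm_neg]
    exact_mod_cast (norm_pow_le _ _).trans
      (pow_le_pow_of_le_one (norm_nonneg Q) hQ1.le (by omega))
  simpa [qPochhammerTail, Function.comp_def, sub_eq_add_neg] using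
    tendsto_tprod_one_add_of_dominated_convergence
      (summable_geometric_of_lt_one (norm_nonneg Q) hQ1) hlim hbound

lemma exists_norm_qPochhammerTail_le (hQ1 : ‖Q‖ < 1) :
    ∃ C, ∀ n, ‖qPochhammerTail Q n‖ ≤ C := by
  have hlim := (tendsto_qPochhammerTail hQ1).comp tendsto_natCast_atTop_atTop
  obtain ⟨C, hC⟩ := hlim.norm.bddAbove_range
  have hC (n : ℕ) : ‖qPochhammerTail Q n‖ ≤ C := hC ⟨n, rfl⟩
  refine ⟨C, fun n ↦ ?_⟩
  rcases lt_or_ge n 0 with hn | hn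
  · rw [qPochhammerTail_of_neg hn, norm_zero]
    exact (norm_nonneg _).trans (hC 0)
  · lift n to ℕ using hn
    exact hC n

end QPochhammerTail

/-- The terms of the finite Jacobi triple product: up to a factor independent of `k`, the term at
`k` of the theta series times the `q ^ 2`-binomial coefficient `[2N, N + k]`. -/
noncomputable def finiteTripleTerm (q z : ℂ) (N : ℕ) (k : ℤ) : ℂ :=
  nomeThetaTerm q z k * (qPochhammerTail (q ^ 2) (N + k) * qPochhammerTail (q ^ 2) (N - k))

section TripleProduct

variable {q z : ℂ}

lemma one_sub_pow_succ_ne_zero {Q : ℂ} (hQ : ‖Q‖ < 1) (n : ℕ) : 1 - Q ^ (n + 1) ≠ 0 := by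
  refine sub_ne_zero.mpr fun h ↦ ?_
  have hnorm := pow_lt_one₀ (norm_nonneg Q) hQ n.succ_ne_zero
  simp [← norm_pow, ← h] at hnorm

lemma summable_norm_odd_pow_mul (hq1 : ‖q‖ < 1) (z : ℂ) :
    Summable fun i : ℕ ↦ ‖q ^ (2 * i + 1) * z‖ := by
  have hgeom := summable_geometric_of_lt_one (norm_nonneg (q ^ 2)) (norm_sq_lt_one hq1)
  refine (hgeom.mul_right ‖q * z‖).congr fun i ↦ ?_
  rw [← norm_pow, ← norm_mul]
  ring_nf

lemma finiteTripleTerm_succ (hq0 : q ≠ 0) (hq1 : ‖q‖ < 1) (hz : z ≠ 0) (N : ℕ) (k : ℤ) :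
    (1 + q ^ (4 * N + 2)) * finiteTripleTerm q z N k +
        q ^ (2 * N + 1) * z * finiteTripleTerm q z N (k - 1) +
        q ^ (2 * N + 1) * z⁻¹ * finiteTripleTerm q z N (k + 1) =
      (1 - (q ^ 2) ^ (2 * N + 1)) * (1 - (q ^ 2) ^ (2 * N + 2)) *
        finiteTripleTerm q z (N + 1) k := by
  have hQ0 : q ^ 2 ≠ 0 := pow_ne_zero 2 hq0
  have hX0 : (q ^ 2) ^ k ≠ 0 := zpow_ne_zero k hQ0
  have htail := qPochhammerTail_sub_one hQ0 (norm_sq_lt_one hq1)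
  have hterm := nomeThetaTerm_add_one hq0 hz (k - 1)
  rw [sub_add_cancel, zpow_sub_one₀ hQ0] at hterm
  set t := nomeThetaTerm q z (k - 1)
  set X := (q ^ 2) ^ k
  set Y := (q ^ 2) ^ (N + 1) with hY
  set a := qPochhammerTail (q ^ 2) ((N + 1 : ℕ) + k) with ha
  set b := qPochhammerTail (q ^ 2) ((N + 1 : ℕ) - k) with hb
  have hYX : (q ^ 2) ^ ((N + 1 : ℕ) + k) = Y * X := by rw [zpow_add₀ hQ0, zpow_natCast]
  have hY_X : (q ^ 2) ^ ((N + 1 : ℕ) - k) = Y / X := by rw [zpow_sub₀ hQ0, zpow_natCast]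
  have hcenter : finiteTripleTerm q z N k =
      q * z * (X * (q ^ 2)⁻¹) * t * ((1 - Y * X) * a * ((1 - Y / X) * b)) := by
    rw [finiteTripleTerm, hterm, ← hYX, ← hY_X, ← htail, ← htail]
    congr 3 <;> push_cast <;> ring
  have hleft : finiteTripleTerm q z N (k - 1) =
      t * ((1 - Y * X * (q ^ 2)⁻¹) * ((1 - Y * X) * a) * b) := by
    rw [finiteTripleTerm, ← hYX, ← htail, ← zpow_sub_one₀ hQ0, ← htail, hb]
    congr 3 <;> push_cast <;> ring
  have hright : finiteTripleTerm q z N (k + 1) =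
      q * z * X * (q * z * (X * (q ^ 2)⁻¹) * t) *
        (a * ((1 - Y / X * (q ^ 2)⁻¹) * ((1 - Y / X) * b))) := by
    rw [finiteTripleTerm, nomeThetaTerm_add_one hq0 hz, hterm, ← hY_X, ← htail,
      ← zpow_sub_one₀ hQ0 ((N + 1 : ℕ) - k), ← htail, ha]
    congr 3 <;> push_cast <;> ring
  rw [hcenter, hleft, hright, finiteTripleTerm, hterm, hY]
  field_simp
  ring

lemma hasSum_finiteTripleTerm_succ (hq0 : q ≠ 0) (hq1 : ‖q‖ < 1) (hz : z ≠ 0) {N : ℕ} {S : ℂ}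
    (hS : HasSum (finiteTripleTerm q z N) S) :
    HasSum (finiteTripleTerm q z (N + 1))
      ((1 + q ^ (2 * N + 1) * z) * (1 + q ^ (2 * N + 1) * z⁻¹) * S /
        ((1 - (q ^ 2) ^ (2 * N + 1)) * (1 - (q ^ 2) ^ (2 * N + 2)))) := by
  have hleft : HasSum (fun k ↦ finiteTripleTerm q z N (k - 1)) S :=
    ((Equiv.subRight (1 : ℤ)).hasSum_iff (f := finiteTripleTerm q z N)).mpr hS
  have hright : HasSum (fun k ↦ finiteTripleTerm q z N (k + 1)) S :=
    ((Equiv.addRight (1 : ℤ)).hasSum_iff (f := finiteTripleTerm q z N)).mpr hS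
  have hsum := ((hS.mul_left (1 + q ^ (4 * N + 2))).add (hleft.mul_left (q ^ (2 * N + 1) * z))).add
    (hright.mul_left (q ^ (2 * N + 1) * z⁻¹))
  simp only [finiteTripleTerm_succ hq0 hq1 hz] at hsum
  have hQ1 := norm_sq_lt_one hq1
  have hfactor : (1 - (q ^ 2) ^ (2 * N + 1)) * (1 - (q ^ 2) ^ (2 * N + 2)) ≠ 0 :=
    mul_ne_zero (one_sub_pow_succ_ne_zero hQ1 (2 * N)) (one_sub_pow_succ_ne_zero hQ1 (2 * N + 1))
  have hvalue : (1 + q ^ (2 * N + 1) * z) * (1 + q ^ (2 * N + 1) * z⁻¹) * S =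
      (1 + q ^ (4 * N + 2)) * S + q ^ (2 * N + 1) * z * S + q ^ (2 * N + 1) * z⁻¹ * S := by
    field_simp
    ring
  refine (hasSum_mul_left_iff hfactor).mp ?_
  rwa [hvalue, mul_div_cancel₀ _ hfactor]

lemma hasSum_finiteTripleTerm (hq0 : q ≠ 0) (hq1 : ‖q‖ < 1) (hz : z ≠ 0) (N : ℕ) :
    HasSum (finiteTripleTerm q z N)
      (qPochhammerTail (q ^ 2) 0 * qPochhammerTail (q ^ 2) (2 * N : ℕ) *
        ∏ i ∈ range N, ((1 + q ^ (2 * i + 1) * z) * (1 + q ^ (2 * i + 1) * z⁻¹))) := by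
  induction N with
  | zero =>
    have hsupp (k : ℤ) (hk : k ≠ 0) : finiteTripleTerm q z 0 k = 0 := by
      rcases hk.lt_or_gt with hk | hk
      · rw [finiteTripleTerm, qPochhammerTail_of_neg (n := (0 : ℕ) + k) (by simpa), zero_mul,
          mul_zero]
      · rw [finiteTripleTerm, qPochhammerTail_of_neg (n := (0 : ℕ) - k) (by simpa), mul_zero,
          mul_zero]
    simpa [finiteTripleTerm, nomeThetaTerm] using hasSum_single 0 hsupp
  | succ N ih =>
    have hQ1 := norm_sq_lt_one hq1
    have htail (m : ℕ) : qPochhammerTail (q ^ 2) m =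
        (1 - (q ^ 2) ^ (m + 1)) * qPochhammerTail (q ^ 2) (m + 1 : ℕ) := by
      rw [← zpow_natCast (q ^ 2), ← qPochhammerTail_sub_one (pow_ne_zero 2 hq0) hQ1, Nat.cast_succ,
        add_sub_cancel_right]
    have hodd := one_sub_pow_succ_ne_zero hQ1 (2 * N)
    have heven := one_sub_pow_succ_ne_zero hQ1 (2 * N + 1)
    convert hasSum_finiteTripleTerm_succ hq0 hq1 hz ih using 1
    rw [htail (2 * N), htail (2 * N + 1), Nat.mul_succ, prod_range_succ,
      eq_div_iff (mul_ne_zero hodd heven)]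
    ring

lemma tendsto_prod_one_add_odd_pow_mul (hq1 : ‖q‖ < 1) (z : ℂ) :
    Tendsto (fun N ↦ ∏ i ∈ range N, (1 + q ^ (2 * i + 1) * z)) atTop
      (𝓝 (∏' i : ℕ, (1 + q ^ (2 * i + 1) * z))) :=
  (multipliable_one_add_of_summable (summable_norm_odd_pow_mul hq1 z)).tendsto_prod_tprod_nat

theorem nomeTheta_eq_tprod (hq0 : q ≠ 0) (hq1 : ‖q‖ < 1) (hz : z ≠ 0) :
    nomeTheta q z = qPochhammerTail (q ^ 2) 0 *
      ((∏' i : ℕ, (1 + q ^ (2 * i + 1) * z)) * ∏' i : ℕ, (1 + q ^ (2 * i + 1) * z⁻¹)) := by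
  have hQ1 := norm_sq_lt_one hq1
  obtain ⟨C, hC⟩ := exists_norm_qPochhammerTail_le hQ1
  have htail := tendsto_qPochhammerTail hQ1
  have hcast : Tendsto (fun N : ℕ ↦ (N : ℤ)) atTop atTop := tendsto_natCast_atTop_atTop
  have hsum : Tendsto (fun N ↦ ∑' k, finiteTripleTerm q z N k) atTop (𝓝 (nomeTheta q z)) := by
    refine tendsto_tsum_of_dominated_convergence (bound := fun k ↦ ‖nomeThetaTerm q z k‖ * (C * C))
      ((summable_nomeThetaTerm hq0 hq1 hz).norm.mul_right (C * C)) (fun k ↦ ?_)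
      (.of_forall fun N k ↦ ?_)
    · have hplus := htail.comp (tendsto_atTop_add_const_right _ k hcast)
      have hminus := htail.comp (tendsto_atTop_add_const_right _ (-k) hcast)
      simpa [finiteTripleTerm, Function.comp_def, sub_eq_add_neg] using
        (hplus.mul hminus).const_mul (nomeThetaTerm q z k)
    · rw [finiteTripleTerm, norm_mul, norm_mul]
      gcongr
      exacts [(norm_nonneg _).trans (hC 0), hC _, hC _]
  simp only [(hasSum_finiteTripleTerm hq0 hq1 hz _).tsum_eq, prod_mul_distrib] at hsum
  have hdouble : Tendsto (fun N : ℕ ↦ ((2 * N : ℕ) : ℤ)) atTop atTop :=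
    hcast.comp (tendsto_id.const_mul_atTop' two_pos)
  have hprod := ((htail.comp hdouble).const_mul (qPochhammerTail (q ^ 2) 0)).mul
    ((tendsto_prod_one_add_odd_pow_mul hq1 z).mul (tendsto_prod_one_add_odd_pow_mul hq1 z⁻¹))
  rw [mul_one] at hprod
  exact tendsto_nhds_unique hsum hprod

theorem nomeTheta_ne_zero (hq0 : q ≠ 0) (hq1 : ‖q‖ < 1) (hz : z ≠ 0)
    (hodd : ∀ n : ℤ, z ≠ -q ^ (2 * n + 1)) : nomeTheta q z ≠ 0 := by
  rw [nomeTheta_eq_tprod hq0 hq1 hz]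
  have htail : qPochhammerTail (q ^ 2) 0 ≠ 0 := mod_cast
    qPochhammerTail_natCast_ne_zero (pow_ne_zero 2 hq0) (norm_sq_lt_one hq1) 0
  refine mul_ne_zero htail (mul_ne_zero ?_ ?_)
  · refine tprod_one_add_ne_zero_of_summable (fun i h ↦ hodd (-i - 1) ?_)
      (summable_norm_odd_pow_mul hq1 z)
    have hexp : 2 * (-i - 1 : ℤ) + 1 = -((2 * i + 1 : ℕ) : ℤ) := by
      push_cast
      ring
    rw [hexp, zpow_neg, zpow_natCast]
    field_simp
    linear_combination h
  · refine tprod_one_add_ne_zero_of_summable (fun i h ↦ hodd i ?_)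
      (summable_norm_odd_pow_mul hq1 z⁻¹)
    have hz_eq : z = -q ^ (2 * i + 1) := by
      field_simp at h
      linear_combination h
    exact_mod_cast hz_eq

lemma nomeTheta_fourth_pow_sq_ne_zero {p : ℂ} (hp0 : p ≠ 0) (hp1 : ‖p‖ < 1) :
    nomeTheta (p ^ 4) (p ^ 2) ≠ 0 := by
  have hp4 : ‖p ^ 4‖ < 1 := by simpa using pow_lt_one₀ (norm_nonneg p) hp1 four_ne_zero
  refine nomeTheta_ne_zero (pow_ne_zero 4 hp0) hp4 (pow_ne_zero 2 hp0) fun n h ↦ ?_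
  have hnorm : ‖p‖ ^ (2 : ℤ) = ‖p‖ ^ (4 * (2 * n + 1)) := by
    simpa [zpow_mul] using congrArg norm h
  have := zpow_right_injective₀ (norm_pos_iff.mpr hp0) hp1.ne hnorm
  omega

end TripleProduct

section JTheta

variable {q Q u v : ℂ}

lemma jtheta_sq (hq : q ≠ 0) (u : ℂ) : jtheta u (q ^ 2) = nomeTheta q (-(q * u)) := by
  refine tsum_congr fun k ↦ ?_
  have htri : 2 * (k * (k + 1) / 2) = k ^ 2 + k := by
    rw [Int.mul_ediv_cancel' (Int.even_mul_succ_self k).two_dvd]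
    ring
  rw [nomeThetaTerm, ← zpow_ofNat q 2, ← zpow_mul, htri, zpow_add₀ hq, neg_eq_neg_one_mul (q * u),
    mul_zpow, mul_zpow]
  ring

lemma exists_norm_lt_one_sq_eq (hQ0 : Q ≠ 0) (hQ1 : ‖Q‖ < 1) :
    ∃ q : ℂ, q ≠ 0 ∧ ‖q‖ < 1 ∧ q ^ 2 = Q := by
  obtain ⟨q, rfl⟩ := IsAlgClosed.exists_pow_nat_eq Q two_pos
  rw [norm_pow] at hQ1
  exact ⟨q, ne_zero_pow two_ne_zero hQ0,
    (pow_lt_one_iff_of_nonneg (norm_nonneg q) two_ne_zero).mp hQ1, rfl⟩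

theorem jtheta_ne_zero (hQ0 : Q ≠ 0) (hQ1 : ‖Q‖ < 1) (hu : u ≠ 0) (huQ : ∀ n : ℤ, u ≠ Q ^ n) :
    jtheta u Q ≠ 0 := by
  obtain ⟨q, hq0, hq1, rfl⟩ := exists_norm_lt_one_sq_eq hQ0 hQ1
  rw [jtheta_sq hq0]
  refine nomeTheta_ne_zero hq0 hq1 (neg_ne_zero.mpr (mul_ne_zero hq0 hu)) fun n h ↦ huQ n ?_
  rw [neg_inj, add_comm, zpow_one_add₀ hq0, zpow_mul, zpow_ofNat] at h
  exact mul_left_cancel₀ hq0 h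

theorem jtheta_mul_jtheta (hQ0 : Q ≠ 0) (hQ1 : ‖Q‖ < 1) (hu : u ≠ 0) (hv : v ≠ 0) :
    jtheta u Q * jtheta v Q =
      nomeTheta Q (Q * (u * v)) * nomeTheta Q (u / v) -
        Q * u * (nomeTheta Q (Q ^ 2 * (u * v)) * nomeTheta Q (Q * (u / v))) := by
  obtain ⟨q, hq0, hq1, rfl⟩ := exists_norm_lt_one_sq_eq hQ0 hQ1
  have hmul : -(q * u) * -(q * v) = q ^ 2 * (u * v) := by ring
  have hdiv : -(q * u) / -(q * v) = u / v := by
    rw [neg_div_neg_eq, mul_div_mul_left _ _ hq0]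
  rw [jtheta_sq hq0, jtheta_sq hq0, nomeTheta_mul_nomeTheta hq0 hq1
    (neg_ne_zero.mpr (mul_ne_zero hq0 hu)) (neg_ne_zero.mpr (mul_ne_zero hq0 hv)), hmul, hdiv]
  ring_nf

theorem jtheta_mul_jtheta_inv (hQ0 : Q ≠ 0) (hQ1 : ‖Q‖ < 1) (hu : u ≠ 0) :
    jtheta u Q * jtheta u⁻¹ Q =
      nomeTheta Q Q * nomeTheta Q (u ^ 2) - u * (nomeTheta Q 1 * nomeTheta Q (Q * u ^ 2)) := by
  have hone := mul_nomeTheta_sq_mul hQ0 one_ne_zero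
  rw [mul_one, mul_one] at hone
  rw [jtheta_mul_jtheta hQ0 hQ1 hu (inv_ne_zero hu), mul_inv_cancel₀ hu, div_inv_eq_mul, ← sq,
    mul_one, mul_one, ← hone]
  ring

lemma jtheta_mul_jtheta_of_sq_eq_one (hQ0 : Q ≠ 0) (hQ1 : ‖Q‖ < 1) (hu : u ≠ 0) {s : ℂ}
    (hs : s ^ 2 = 1) :
    jtheta (s * u⁻¹) Q * jtheta (s * u) Q =
      nomeTheta Q Q * nomeTheta Q (u ^ 2) -
        s * u * (nomeTheta Q 1 * nomeTheta Q (Q * u ^ 2)) := by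
  have hs0 : s ≠ 0 := ne_zero_pow two_ne_zero (hs ▸ one_ne_zero)
  have hs_inv : s = s⁻¹ := eq_inv_of_mul_eq_one_left (by rw [← sq, hs])
  have hinv : s * u⁻¹ = (s * u)⁻¹ := by rw [mul_inv, ← hs_inv]
  rw [hinv, mul_comm, jtheta_mul_jtheta_inv hQ0 hQ1 (mul_ne_zero hs0 hu), mul_pow, hs, one_mul]

lemma jtheta_eq_neg_mul_jtheta_mul (hQ : Q ≠ 0) (hu : u ≠ 0) :
    jtheta u Q = -(Q * u) * jtheta (Q * u) Q := by
  obtain ⟨q, rfl⟩ := IsAlgClosed.exists_pow_nat_eq Q two_pos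
  have hq0 : q ≠ 0 := ne_zero_pow two_ne_zero hQ
  rw [jtheta_sq hq0, jtheta_sq hq0, ← mul_nomeTheta_sq_mul hq0
    (neg_ne_zero.mpr (mul_ne_zero hq0 hu))]
  ring_nf

end JTheta

section FourthPower

variable {p y Λ s : ℂ}

theorem jtheta_inv_mul_jtheta_inv_cube (hp0 : p ≠ 0) (hQ1 : ‖p ^ 4‖ < 1) (hy : y ≠ 0) :
    jtheta (p ^ (-1 : ℤ) * y) (p ^ 4) * jtheta (p ^ (-3 : ℤ) * y) (p ^ 4) =
      nomeTheta (p ^ 4) (p ^ 2) *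
        (nomeTheta (p ^ 4) (y ^ 2) - p * y * nomeTheta (p ^ 4) (p ^ 4 * y ^ 2)) := by
  have hp4 : p ^ 4 ≠ 0 := pow_ne_zero 4 hp0
  have hreflect : p ^ 2 * nomeTheta (p ^ 4) (p ^ 6) = nomeTheta (p ^ 4) (p ^ 2) := by
    rw [← nomeTheta_inv _ (p ^ 2), ← mul_nomeTheta_sq_mul hp4 (inv_ne_zero (pow_ne_zero 2 hp0))]
    congr 2 <;> field_simp
  have hmul : p ^ (-1 : ℤ) * y * (p ^ (-3 : ℤ) * y) = y ^ 2 / p ^ 4 := by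
    field_simp
  have hdiv : p ^ (-1 : ℤ) * y / (p ^ (-3 : ℤ) * y) = p ^ 2 := by
    field_simp
  rw [jtheta_mul_jtheta hp4 hQ1 (mul_ne_zero (zpow_ne_zero _ hp0) hy)
    (mul_ne_zero (zpow_ne_zero _ hp0) hy), hmul, hdiv, ← hreflect]
  have hcenter : p ^ 4 * (y ^ 2 / p ^ 4) = y ^ 2 := mul_div_cancel₀ _ hp4
  have hshift : (p ^ 4) ^ 2 * (y ^ 2 / p ^ 4) = p ^ 4 * y ^ 2 := by
    field_simp
  have hlead : p ^ 4 * (p ^ (-1 : ℤ) * y) = p ^ 3 * y := by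
    field_simp
  have hdouble : p ^ 4 * p ^ 2 = p ^ 6 := by ring
  rw [hcenter, hshift, hlead, hdouble]
  ring

lemma jtheta_zpow_mul_ne_zero (hp0 : p ≠ 0) (hQ1 : ‖p ^ 4‖ < 1) (hΛ0 : Λ ≠ 0)
    (hΛ : ∀ n : ℤ, Λ ≠ p ^ (2 * n)) {m : ℤ} (hm : Even m) :
    jtheta (p ^ m * Λ) (p ^ 4) ≠ 0 := by
  obtain ⟨m, rfl⟩ := hm.two_dvd
  refine jtheta_ne_zero (pow_ne_zero 4 hp0) hQ1 (mul_ne_zero (zpow_ne_zero _ hp0) hΛ0)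
    fun n h ↦ hΛ (2 * n - m) ?_
  rw [mul_sub, zpow_sub₀ hp0, eq_div_iff (zpow_ne_zero _ hp0), mul_comm, h, ← zpow_natCast p,
    ← zpow_mul]
  congr 1
  ring

lemma residue_denominator_snd (hp0 : p ≠ 0) (hQ1 : ‖p ^ 4‖ < 1) (hΛ0 : Λ ≠ 0) :
    jtheta (p ^ (-2 : ℤ) * Λ) (p ^ 4) * jtheta (p ^ (-4 : ℤ) * Λ) (p ^ 4) =
      nomeTheta (p ^ 4) (p ^ 2) *
        (nomeTheta (p ^ 4) ((p ^ (-1 : ℤ) * Λ) ^ 2) -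
          Λ * nomeTheta (p ^ 4) (p ^ 4 * (p ^ (-1 : ℤ) * Λ) ^ 2)) := by
  have hy : p ^ (-1 : ℤ) * Λ ≠ 0 := mul_ne_zero (zpow_ne_zero _ hp0) hΛ0
  have htwo : p ^ (-1 : ℤ) * (p ^ (-1 : ℤ) * Λ) = p ^ (-2 : ℤ) * Λ := by field_simp
  have hfour : p ^ (-3 : ℤ) * (p ^ (-1 : ℤ) * Λ) = p ^ (-4 : ℤ) * Λ := by field_simp
  have hone : p * (p ^ (-1 : ℤ) * Λ) = Λ := by field_simp
  rw [← htwo, ← hfour, jtheta_inv_mul_jtheta_inv_cube hp0 hQ1 hy, hone]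

lemma residue_denominator_fst (hp0 : p ≠ 0) (hΛ0 : Λ ≠ 0) :
    jtheta (p ^ (-4 : ℤ) * Λ) (p ^ 4) * jtheta (p ^ (-6 : ℤ) * Λ) (p ^ 4) =
      -(p ^ (-2 : ℤ) * Λ) *
        (jtheta (p ^ (-2 : ℤ) * Λ) (p ^ 4) * jtheta (p ^ (-4 : ℤ) * Λ) (p ^ 4)) := by
  have hshift : p ^ 4 * (p ^ (-6 : ℤ) * Λ) = p ^ (-2 : ℤ) * Λ := by field_simp
  rw [jtheta_eq_neg_mul_jtheta_mul (u := p ^ (-6 : ℤ) * Λ) (pow_ne_zero 4 hp0)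
    (mul_ne_zero (zpow_ne_zero _ hp0) hΛ0), hshift]
  ring

lemma residue_numerator_snd (hp0 : p ≠ 0) (hQ1 : ‖p ^ 4‖ < 1) (hΛ0 : Λ ≠ 0) (hs : s ^ 2 = 1) :
    jtheta (s * (p ^ (1 : ℤ) * Λ⁻¹)) (p ^ 4) * jtheta (s * (p ^ (-1 : ℤ) * Λ)) (p ^ 4) =
      nomeTheta (p ^ 4) (p ^ 4) * nomeTheta (p ^ 4) ((p ^ (-1 : ℤ) * Λ) ^ 2) -
        s * (p ^ (-1 : ℤ) * Λ) *
          (nomeTheta (p ^ 4) 1 * nomeTheta (p ^ 4) (p ^ 4 * (p ^ (-1 : ℤ) * Λ) ^ 2)) := by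
  have hinv : p ^ (1 : ℤ) * Λ⁻¹ = (p ^ (-1 : ℤ) * Λ)⁻¹ := by field_simp
  rw [hinv, jtheta_mul_jtheta_of_sq_eq_one (pow_ne_zero 4 hp0) hQ1
    (mul_ne_zero (zpow_ne_zero _ hp0) hΛ0) hs]

lemma residue_numerator_fst (hp0 : p ≠ 0) (hQ1 : ‖p ^ 4‖ < 1) (hΛ0 : Λ ≠ 0) (hs : s ^ 2 = 1) :
    jtheta (s * (p ^ (3 : ℤ) * Λ⁻¹)) (p ^ 4) * jtheta (s * (p ^ (-3 : ℤ) * Λ)) (p ^ 4) =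
      (p ^ (-1 : ℤ) * Λ) ^ 2 *
          (nomeTheta (p ^ 4) (p ^ 4) * nomeTheta (p ^ 4) (p ^ 4 * (p ^ (-1 : ℤ) * Λ) ^ 2)) -
        s * (p ^ (-3 : ℤ) * Λ) *
          (nomeTheta (p ^ 4) 1 * nomeTheta (p ^ 4) ((p ^ (-1 : ℤ) * Λ) ^ 2)) := by
  have hp4 : p ^ 4 ≠ 0 := pow_ne_zero 4 hp0
  have hu : p ^ (-3 : ℤ) * Λ ≠ 0 := mul_ne_zero (zpow_ne_zero _ hp0) hΛ0
  have hinv : p ^ (3 : ℤ) * Λ⁻¹ = (p ^ (-3 : ℤ) * Λ)⁻¹ := by field_simp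
  have hshift : p ^ 4 * (p ^ (-3 : ℤ) * Λ) ^ 2 = (p ^ (-1 : ℤ) * Λ) ^ 2 := by field_simp
  have hshift_sq : (p ^ 4) ^ 2 * (p ^ (-3 : ℤ) * Λ) ^ 2 = p ^ 4 * (p ^ (-1 : ℤ) * Λ) ^ 2 := by
    field_simp
  rw [hinv, jtheta_mul_jtheta_of_sq_eq_one hp4 hQ1 hu hs,
    ← mul_nomeTheta_sq_mul hp4 (pow_ne_zero 2 hu), hshift_sq, hshift]
  ring

theorem residue_coefficient_eq (hp0 : p ≠ 0) (hQ1 : ‖p ^ 4‖ < 1) (hΛ0 : Λ ≠ 0)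
    (hΛ : ∀ n : ℤ, Λ ≠ p ^ (2 * n)) (hs : s ^ 2 = 1) :
    jtheta (s * (p ^ (3 : ℤ) * Λ⁻¹)) (p ^ 4) * jtheta (s * (p ^ (-3 : ℤ) * Λ)) (p ^ 4) /
          (2 * jtheta (p ^ (-4 : ℤ) * Λ) (p ^ 4) * jtheta (p ^ (-6 : ℤ) * Λ) (p ^ 4)) +
        jtheta (s * (p ^ (1 : ℤ) * Λ⁻¹)) (p ^ 4) * jtheta (s * (p ^ (-1 : ℤ) * Λ)) (p ^ 4) /
          (2 * jtheta (p ^ (-2 : ℤ) * Λ) (p ^ 4) * jtheta (p ^ (-4 : ℤ) * Λ) (p ^ 4)) =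
      (nomeTheta (p ^ 4) (p ^ 4) + s / p * nomeTheta (p ^ 4) 1) /
        (2 * nomeTheta (p ^ 4) (p ^ 2)) := by
  have hneg_two : jtheta (p ^ (-2 : ℤ) * Λ) (p ^ 4) ≠ 0 :=
    jtheta_zpow_mul_ne_zero hp0 hQ1 hΛ0 hΛ (by decide)
  have hneg_four : jtheta (p ^ (-4 : ℤ) * Λ) (p ^ 4) ≠ 0 :=
    jtheta_zpow_mul_ne_zero hp0 hQ1 hΛ0 hΛ (by decide)
  have hdenom := mul_ne_zero hneg_two hneg_four
  rw [residue_denominator_snd hp0 hQ1 hΛ0] at hdenom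
  obtain ⟨hγ, hfactor⟩ := mul_ne_zero_iff.mp hdenom
  rw [mul_assoc 2, mul_assoc 2, residue_numerator_fst hp0 hQ1 hΛ0 hs,
    residue_numerator_snd hp0 hQ1 hΛ0 hs, residue_denominator_fst hp0 hΛ0,
    residue_denominator_snd hp0 hQ1 hΛ0]
  set G := nomeTheta (p ^ 4) ((p ^ (-1 : ℤ) * Λ) ^ 2)
  set F := nomeTheta (p ^ 4) (p ^ 4 * (p ^ (-1 : ℤ) * Λ) ^ 2)
  field_simp
  ring

end FourthPower

/-- The theta-function identity (with `q = p⁴`, `λ₁ = Λ`) expressing that the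
residues of the elliptic function `m_{2,1}` of the 4₁ knot monodromy sum to zero. -/
theorem residues_sum_to_one
    (p : ℂ) (hp0 : 0 < ‖p‖) (hp1 : ‖p‖ < 1)
    (Λ : ℂ) (hΛ0 : Λ ≠ 0) (hΛ : ∀ n : ℤ, Λ ≠ p ^ (2 * n))
    (x : ℂ) (hx0 : x ≠ 0) (hx : ∀ n : ℤ, x ≠ p ^ (4 * n)) :
    (1 : ℂ) =
      (jtheta (p ^ (3 : ℤ) * Λ⁻¹) (p ^ 4) * jtheta (p ^ (-3 : ℤ) * Λ) (p ^ 4) /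
            (2 * jtheta (p ^ (-4 : ℤ) * Λ) (p ^ 4) * jtheta (p ^ (-6 : ℤ) * Λ) (p ^ 4)) +
          jtheta (p ^ (1 : ℤ) * Λ⁻¹) (p ^ 4) * jtheta (p ^ (-1 : ℤ) * Λ) (p ^ 4) /
            (2 * jtheta (p ^ (-2 : ℤ) * Λ) (p ^ 4) * jtheta (p ^ (-4 : ℤ) * Λ) (p ^ 4))) *
        (jtheta (p ^ (-1 : ℤ) * x) (p ^ 4) * jtheta (p ^ (-3 : ℤ) * x) (p ^ 4) /
          (jtheta x (p ^ 4) * jtheta x⁻¹ (p ^ 4))) +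
      (jtheta (-(p ^ (3 : ℤ) * Λ⁻¹)) (p ^ 4) * jtheta (-(p ^ (-3 : ℤ) * Λ)) (p ^ 4) /
            (2 * jtheta (p ^ (-4 : ℤ) * Λ) (p ^ 4) * jtheta (p ^ (-6 : ℤ) * Λ) (p ^ 4)) +
          jtheta (-(p ^ (1 : ℤ) * Λ⁻¹)) (p ^ 4) * jtheta (-(p ^ (-1 : ℤ) * Λ)) (p ^ 4) /
            (2 * jtheta (p ^ (-2 : ℤ) * Λ) (p ^ 4) * jtheta (p ^ (-4 : ℤ) * Λ) (p ^ 4))) *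
        (jtheta (-(p ^ (-1 : ℤ) * x)) (p ^ 4) * jtheta (-(p ^ (-3 : ℤ) * x)) (p ^ 4) /
          (jtheta x (p ^ 4) * jtheta x⁻¹ (p ^ 4))) := by
  have hp : p ≠ 0 := norm_pos_iff.mp hp0
  have hp4 : p ^ 4 ≠ 0 := pow_ne_zero 4 hp
  have hQ1 : ‖p ^ 4‖ < 1 := by simpa using pow_lt_one₀ (norm_nonneg p) hp1 four_ne_zero
  have hplus := residue_coefficient_eq hp hQ1 hΛ0 hΛ (one_pow 2)
  have hminus := residue_coefficient_eq hp hQ1 hΛ0 hΛ neg_one_sq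
  have hxplus := jtheta_inv_mul_jtheta_inv_cube hp hQ1 hx0
  have hxminus := jtheta_inv_mul_jtheta_inv_cube hp hQ1 (neg_ne_zero.mpr hx0)
  simp only [one_mul, neg_one_mul, mul_neg, neg_sq] at hplus hminus hxminus
  have hγ : nomeTheta (p ^ 4) (p ^ 2) ≠ 0 := nomeTheta_fourth_pow_sq_ne_zero hp hp1
  have hx' : ∀ n : ℤ, x ≠ (p ^ 4) ^ n := fun n ↦ by simpa [zpow_mul] using hx n
  have hθ : jtheta x (p ^ 4) ≠ 0 := jtheta_ne_zero hp4 hQ1 hx0 hx'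
  have hθ_inv : jtheta x⁻¹ (p ^ 4) ≠ 0 := jtheta_ne_zero hp4 hQ1 (inv_ne_zero hx0)
    fun n h ↦ hx' (-n) (by rw [zpow_neg, ← h, inv_inv])
  have hpole := jtheta_mul_jtheta_inv hp4 hQ1 hx0
  have hpole_ne := mul_ne_zero hθ hθ_inv
  rw [hplus, hminus, hxplus, hxminus]
  generalize jtheta x (p ^ 4) * jtheta x⁻¹ (p ^ 4) = D at hpole hpole_ne ⊢
  field_simp
  linear_combination 2 * p * hpole
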